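/- Let p be an odd prime and let s be an integer with 1 ≤ s ≤ 8p, s ≡ 1 (mod 8), and s a quadratic nonresidue modulo p. Then for all n ≥ 0, T_2(pn + (s−1)/8) ≡ 0 (mod 2). -/

import Mathlib

noncomputable def Tcount (ℓ k n : ℕ) : ℕ :=
  Nat.card {f : Fin k → Σ m : ℕ, Nat.Partition m //
    (∑ i, (f i).1) = n ∧ ∀ i, ∀ p ∈ (f i).2.parts, ¬ ℓ ∣ p}

open Finset PowerSeries

section Shanks
variable {R : Type*} [CommRing R]

/-- Product of `1 - q^(2k+1)`, `k < n`. -/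
def shD (q : R) (n : ℕ) : R := ∏ k ∈ range n, (1 - q ^ (2 * k + 1))

/-- Product of `1 - q^(2k+2)`, `s ≤ k < n`. -/
def shG (q : R) (s n : ℕ) : R := ∏ k ∈ Ico s n, (1 - q ^ (2 * k + 2))

lemma shanks_tele (q : R) (n m : ℕ) (hm : m ≤ n) :
    ∑ s ∈ range (m + 1), (shG q s (n + 1) * shD q s * q ^ (s * (2 * n + 3))
      - (1 - q ^ (2 * n + 1)) * (shG q s n * shD q s * q ^ (s * (2 * n + 1))))
    = q ^ ((m + 1) * (2 * n + 1)) * shG q m n * shD q (m + 1) := by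
  have hG : ∀ s ≤ n, shG q s (n + 1) = shG q s n * (1 - q ^ (2 * n + 2)) := by
    intro s hs
    simp only [shG]
    rw [prod_Ico_succ_top hs]
  have hD : ∀ s, shD q (s + 1) = shD q s * (1 - q ^ (2 * s + 1)) := by
    intro s
    simp only [shD]
    rw [prod_range_succ]
  induction m with
  | zero =>
    simp only [zero_add, sum_range_one]
    rw [hG 0 (by omega), hD 0]
    simp
    ring
  | succ m ih =>
    have h1 : shG q m n = (1 - q ^ (2 * m + 2)) * shG q (m + 1) n := by
      simp only [shG]
      rw [prod_eq_prod_Ico_succ_bot (by omega)]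
    rw [sum_range_succ, ih (by omega), hG (m + 1) hm, hD (m + 1), h1]
    ring

lemma shanks (q : R) (n : ℕ) :
    shD q n * ∑ k ∈ range (2 * n), q ^ (k * (k + 1) / 2)
      = ∑ s ∈ range n, shG q s n * shD q s * q ^ (s * (2 * n + 1)) := by
  induction n with
  | zero => simp
  | succ n ih =>
    have h := shanks_tele q n n le_rfl
    rw [sum_sub_distrib, ← mul_sum, sum_range_succ (fun s => shG q s n * shD q s * _) n, ← ih] at h
    have h0 : shG q n n = 1 := by simp [shG]
    have e1 : 2 * n * (2 * n + 1) / 2 = n * (2 * n + 1) := by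
      rw [mul_assoc, Nat.mul_div_cancel_left _ (by norm_num)]
    have e2 : (2 * n + 1) * (2 * n + 1 + 1) / 2 = (n + 1) * (2 * n + 1) := by
      rw [show (2 * n + 1) * (2 * n + 1 + 1) = 2 * ((n + 1) * (2 * n + 1)) by ring,
        Nat.mul_div_cancel_left _ (by norm_num)]
    have hD : shD q (n + 1) = shD q n * (1 - q ^ (2 * n + 1)) := by
      simp only [shD]
      rw [prod_range_succ]
    rw [h0, hD] at h
    rw [show 2 * (n + 1) = 2 * n + 1 + 1 by ring, sum_range_succ, sum_range_succ, e1, e2, hD]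
    rw [show 2 * n + 1 + 1 + 1 = 2 * n + 3 by ring]
    linear_combination -h

/-- Congruence form. -/
lemma shanks_dvd (q : R) (n : ℕ) : ∃ r : R,
    shD q (n + 1) * ∑ k ∈ range (2 * (n + 1)), q ^ (k * (k + 1) / 2)
      = shG q 0 (n + 1) + q ^ n * r := by
  rw [shanks, sum_range_succ']
  refine ⟨∑ s ∈ range n, shG q (s + 1) (n + 1) * shD q (s + 1) *
    q ^ ((s + 1) * (2 * (n + 1) + 1) - n), ?_⟩
  rw [mul_sum, add_comm]
  congr 1
  · simp [shD]
  · refine sum_congr rfl fun s _ => ?_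
    rw [mul_left_comm, ← pow_add]
    congr 2
    rw [Nat.add_sub_cancel']
    nlinarith

lemma shD_mul_shG (q : R) (n : ℕ) :
    shD q n * shG q 0 n = ∏ i ∈ range (2 * n), (1 - q ^ (i + 1)) := by
  induction n with
  | zero => simp [shD, shG]
  | succ n ih =>
    rw [show 2 * (n + 1) = 2 * n + 1 + 1 by ring, prod_range_succ, prod_range_succ, ← ih]
    simp only [shD, shG]
    rw [prod_range_succ, prod_Ico_succ_top (Nat.zero_le n)]
    ring

end Shanks

/-- Generating function of partitions into odd parts mod 2. -/
noncomputable def FF : (ZMod 2)⟦X⟧ :=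
  PowerSeries.mk fun n ↦ (#(Nat.Partition.restricted n (¬ 2 ∣ ·)) : ZMod 2)

lemma sub_eq_add2 (a b : (ZMod 2)⟦X⟧) : a - b = a + b := by
  rw [sub_eq_add_neg]
  congr 1
  ext m
  rw [map_neg]
  exact ZMod.neg_eq_self_mod_two _

lemma shG_sq (n : ℕ) : shG (X : (ZMod 2)⟦X⟧) 0 n = (∏ i ∈ range n, (1 - X ^ (i + 1))) ^ 2 := by
  rw [← prod_pow, shG, ← range_eq_Ico]
  refine prod_congr rfl fun k _ => ?_
  have h2 : (X : (ZMod 2)⟦X⟧) ^ (k + 1) - X ^ (k + 1) = X ^ (k + 1) + X ^ (k + 1) :=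
    sub_eq_add2 _ _
  have h3 : (1 : (ZMod 2)⟦X⟧) - X ^ (2 * k + 2) = 1 + X ^ (2 * k + 2) := sub_eq_add2 _ _
  rw [h3]
  linear_combination -h2

/-- The theta series, truncated. -/
noncomputable def SS (n : ℕ) : (ZMod 2)⟦X⟧ := ∑ k ∈ range n, X ^ (k * (k + 1) / 2)

lemma coeff_SS (m n : ℕ) (h : m < n) : coeff m (SS n) = coeff m (SS (m + 1)) := by
  induction n, h using Nat.le_induction with
  | base => rfl
  | succ n hn ih =>
    rw [SS, sum_range_succ, map_add, coeff_X_pow, if_neg, add_zero, ← ih, SS]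
    have : n ≤ n * (n + 1) / 2 := by
      rw [Nat.le_div_iff_mul_le (by norm_num)]
      nlinarith [hn]
    omega

lemma FF_cube : (FF ^ 3) = PowerSeries.mk fun m => coeff m (SS (m + 1)) := by
  let _ : TopologicalSpace (ZMod 2) := ⊥
  have : DiscreteTopology (ZMod 2) := ⟨rfl⟩
  open PowerSeries.WithPiTopology in
  have hF : HasProd (fun i => (1 - X ^ (i + 1) : (ZMod 2)⟦X⟧)) FF := by
    have h := Nat.Partition.hasProd_powerSeriesMk_card_countRestricted (ZMod 2) (m := 2) (by norm_num)
    rw [← Nat.Partition.powerSeriesMk_card_restricted_eq_powerSeriesMk_card_countRestricted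
      (ZMod 2) (by norm_num)] at h
    have hf : (fun i => (1 - X ^ (i + 1) : (ZMod 2)⟦X⟧)) =
        fun i => ∑ j ∈ range 2, X ^ ((i + 1) * j) := by
      funext i
      rw [sub_eq_add2]
      simp [sum_range_succ]
    rw [hf]
    exact h
  open PowerSeries.WithPiTopology in
  have key : FF * (PowerSeries.mk fun m => coeff m (SS (m + 1))) = FF * FF ^ 3 := by
    have t0 := hF.tendsto_prod_nat
    have hd : Filter.Tendsto (fun n : ℕ => 2 * (n + 1)) Filter.atTop Filter.atTop :=
      Filter.tendsto_atTop_mono (fun n => by simp only [id]; omega) Filter.tendsto_id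
    have t1 := t0.comp hd
    have t2 : Filter.Tendsto (fun n : ℕ => SS (2 * (n + 1))) Filter.atTop
        (nhds (PowerSeries.mk fun m => coeff m (SS (m + 1)))) := by
      rw [tendsto_iff_coeff_tendsto]
      intro m
      refine tendsto_const_nhds.congr' ?_
      filter_upwards [Filter.eventually_ge_atTop m] with n hn
      rw [coeff_mk, coeff_SS m (2 * (n + 1)) (by omega)]
    have t3 := ((t0.comp (Filter.tendsto_add_atTop_nat 1)).pow 4)
    choose r hr using shanks_dvd (X : (ZMod 2)⟦X⟧)
    have t4 : Filter.Tendsto (fun n : ℕ => (X : (ZMod 2)⟦X⟧) ^ n * (r n * shG X 0 (n + 1)))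
        Filter.atTop (nhds 0) := by
      rw [tendsto_iff_coeff_tendsto]
      intro m
      refine tendsto_const_nhds.congr' ?_
      filter_upwards [Filter.eventually_gt_atTop m] with n hn
      rw [coeff_X_pow_mul', if_neg (by omega), map_zero]
    have t5 := t3.add t4
    have t6 := t1.mul t2
    have e : FF * FF ^ 3 = FF ^ 4 + 0 := by ring
    rw [e]
    refine tendsto_nhds_unique (t6.congr fun n => ?_) t5
    simp only [Function.comp]
    rw [← shD_mul_shG, mul_right_comm, SS, hr, shG_sq]
    ring
  have h0 : FF ≠ 0 := by
    intro h
    have := congrArg (coeff 0) h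
    simp [FF, Nat.Partition.restricted] at this
  exact (mul_left_cancel₀ h0 key).symm

lemma Tcount_coeff (N : ℕ) : (Tcount 2 3 N : ZMod 2) = coeff N (FF ^ 3) := by
  classical
  have e : {f : Fin 3 → Σ m : ℕ, Nat.Partition m //
      (∑ i, (f i).1) = N ∧ ∀ i, ∀ p ∈ (f i).2.parts, ¬ 2 ∣ p} ≃
      Σ l : (finsuppAntidiag (univ : Finset (Fin 3)) N),
        ∀ i : Fin 3, Nat.Partition.restricted (l.1 i) (¬ 2 ∣ ·) :=
    { toFun := fun f => ⟨⟨Finsupp.equivFunOnFinite.symm (fun i => (f.1 i).1), by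
          simpa using f.2.1⟩, fun i => ⟨(f.1 i).2, by
          exact mem_filter.2 ⟨mem_univ _, f.2.2 i⟩⟩⟩
      invFun := fun g => ⟨fun i => ⟨g.1.1 i, (g.2 i).1⟩, by
          have := g.1.2
          rw [mem_finsuppAntidiag] at this
          exact this.1, fun i => by
          have := (g.2 i).2
          simp only [Nat.Partition.restricted, mem_filter] at this
          exact this.2⟩
      left_inv := fun f => rfl
      right_inv := fun g => by
        rcases g with ⟨⟨l, hl⟩, g⟩
        obtain ⟨f, rfl⟩ := Finsupp.equivFunOnFinite.symm.surjective l
        rfl }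
  have h3 : FF ^ 3 = ∏ _i : Fin 3, FF := by simp
  rw [h3, coeff_prod, Tcount, Nat.card_congr e, Nat.card_eq_fintype_card, Fintype.card_sigma]
  rw [← sum_coe_sort (finsuppAntidiag (univ : Finset (Fin 3)) N)
    (fun l => ∏ i : Fin 3, coeff (l i) FF), Nat.cast_sum]
  apply Fintype.sum_congr
  intro l
  rw [Fintype.card_pi, Nat.cast_prod]
  apply Fintype.prod_congr
  intro i
  rw [Fintype.card_coe, FF, coeff_mk]

theorem stmt15 (p : ℕ) (hp : p.Prime) (hodd : Odd p) (s : ℕ)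
    (hs1 : 1 ≤ s) (hs2 : s ≤ 8 * p) (hs8 : s ≡ 1 [MOD 8])
    (hqnr : ¬ IsSquare ((s : ZMod p))) (n : ℕ) :
    2 ∣ Tcount 2 3 (p * n + (s - 1) / 8) := by
  rw [← ZMod.natCast_eq_zero_iff, Tcount_coeff, FF_cube, coeff_mk, SS, map_sum]
  refine sum_eq_zero fun k _ => ?_
  rw [coeff_X_pow, if_neg]
  intro h
  apply hqnr
  have h8 : s = 8 * ((s - 1) / 8) + 1 := by
    have : s % 8 = 1 := hs8
    omega
  have hk : 2 * (k * (k + 1) / 2) = k * (k + 1) :=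
    Nat.mul_div_cancel' (Nat.even_mul_succ_self k).two_dvd
  have hn : s + 8 * (p * n) = (2 * k + 1) * (2 * k + 1) := by
    have : (2 * k + 1) * (2 * k + 1) = 4 * (k * (k + 1)) + 1 := by ring
    omega
  refine ⟨((2 * k + 1 : ℕ) : ZMod p), ?_⟩
  rw [← Nat.cast_mul, ← hn]
  simp
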